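/- arXiv:1707.00970 — 3 statements merged into one kernel-verified Lean document; each statement's English description precedes it below -/
import Mathlib

section
/- Let (a, B_a) be a NIS-Lie superalgebra over a field K of characteristic 2 with B_a even. Let D be an even derivation of a satisfying B_a(D(u),v) + B_a(u,D(v)) = 0 for all u,v ∈ a and B_a(D(u),u) = 0 for all u ∈ a_0, and let α be a quadratic form on a_1 whose polar form satisfies B_a(u,D(v)) = B_α(u,v) for all u,v ∈ a_1. Then on g := Kx ⊕ a ⊕ Kx* with x and x* even, the squaring s_g(u) := s_a(u) + α(u)x for u ∈ g_1 = a_1, together with the bracket [x,g]_g := 0, [u,v]_g := [u,v]_a + B_a(D(u),v)x for u,v ∈ a, and [x*,u]_g := D(u), defines a Lie superalgebra structure on g; moreover the bilinear form B_g determined by B_g|_{a×a} = B_a, B_g(a,x) = B_g(a,x*) = 0, B_g(x,x*) = 1, B_g(x,x) = 0 and B_g(x*,x*) arbitrary is even, non-degenerate, symmetric and invariant, so that (g,B_g) is a NIS-Lie superalgebra (called the D_ev-extension of (a,B_a) by means of D and α). -/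
/-!
Common definitions: Lie superalgebras in characteristic 2 (encoded by their even
part `g0`, odd part `g1`, bracket components and squaring), NIS forms (even and odd),
homogeneous derivations, isometries, ideals, irreducibility, and the structure
formulas of the various double extensions.
-/

namespace Char2DoubleExt

section Defs

variable (K : Type) [Field K]
variable (g0 g1 h0 h1 : Type)
variable [AddCommGroup g0] [Module K g0] [AddCommGroup g1] [Module K g1]
variable [AddCommGroup h0] [Module K h0] [AddCommGroup h1] [Module K h1]

/-- A Lie superalgebra over a field of characteristic 2: `g0` is the even part,
`g1` the odd part, `br0` the bracket on `g0`, `br1` the action of `g0` on `g1`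
(the mixed bracket, extended symmetrically), `br11` the bracket of two odd
elements, and `sq` the squaring, whose polarization is `br11`. -/
structure SuperAlg : Type where
  br0 : g0 →ₗ[K] g0 →ₗ[K] g0
  br1 : g0 →ₗ[K] g1 →ₗ[K] g1
  br11 : g1 →ₗ[K] g1 →ₗ[K] g0
  sq : g1 → g0
  sq_smul : ∀ (c : K) (f : g1), sq (c • f) = (c * c) • sq f
  sq_add : ∀ f g : g1, sq (f + g) = sq f + sq g + br11 f g
  br0_self : ∀ x : g0, br0 x x = 0
  br11_comm : ∀ f g : g1, br11 f g = br11 g f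
  jacobi0 : ∀ x y z : g0, br0 x (br0 y z) + br0 y (br0 z x) + br0 z (br0 x y) = 0
  act_br : ∀ (x y : g0) (f : g1), br1 (br0 x y) f = br1 x (br1 y f) + br1 y (br1 x f)
  jacobi_mix : ∀ (x : g0) (f g : g1),
    br0 x (br11 f g) + br11 f (br1 x g) + br11 g (br1 x f) = 0
  sq_br0 : ∀ (f : g1) (x : g0), br0 (sq f) x = br11 f (br1 x f)
  sq_br1 : ∀ f g : g1, br1 (sq f) g = br1 (br11 f g) f

/-- A non-degenerate invariant supersymmetric *even* bilinear form on a Lie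
superalgebra in characteristic 2: it pairs `g0` with `g0` (component `B0`) and
`g1` with `g1` (component `B1`); mixed pairings vanish by evenness. -/
structure EvenNIS (S : SuperAlg K g0 g1) : Type where
  B0 : g0 →ₗ[K] g0 →ₗ[K] K
  B1 : g1 →ₗ[K] g1 →ₗ[K] K
  symm0 : ∀ x y, B0 x y = B0 y x
  symm1 : ∀ f g, B1 f g = B1 g f
  alt1 : ∀ f, B1 f f = 0
  nondeg0 : ∀ x, (∀ y, B0 x y = 0) → x = 0
  nondeg1 : ∀ f, (∀ g, B1 f g = 0) → f = 0
  inv0 : ∀ x y z, B0 (S.br0 x y) z = B0 x (S.br0 y z)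
  inv1 : ∀ (x : g0) (f g : g1), B1 (S.br1 x f) g = B0 x (S.br11 f g)
  inv2 : ∀ (f g : g1) (x : g0), B0 (S.br11 f g) x = B1 f (S.br1 x g)

/-- A non-degenerate invariant supersymmetric *odd* bilinear form: it pairs `g0`
with `g1` (component `Bo`); like-parity pairings vanish by oddness, and
`B(f,f) = 0` for odd `f` is automatic. -/
structure OddNIS (S : SuperAlg K g0 g1) : Type where
  Bo : g0 →ₗ[K] g1 →ₗ[K] K
  nondeg0 : ∀ x, (∀ f, Bo x f = 0) → x = 0
  nondeg1 : ∀ f, (∀ x, Bo x f = 0) → f = 0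
  inv0 : ∀ (x y : g0) (f : g1), Bo (S.br0 x y) f = Bo x (S.br1 y f)
  inv1 : ∀ (x y : g0) (f : g1), Bo y (S.br1 x f) = Bo x (S.br1 y f)
  inv2 : ∀ f g h : g1, Bo (S.br11 f g) h = Bo (S.br11 g h) f

/-- An even derivation of a Lie superalgebra in characteristic 2. -/
structure EvenDer (S : SuperAlg K g0 g1) : Type where
  D0 : g0 →ₗ[K] g0
  D1 : g1 →ₗ[K] g1
  der0 : ∀ x y, D0 (S.br0 x y) = S.br0 (D0 x) y + S.br0 x (D0 y)
  der1 : ∀ x f, D1 (S.br1 x f) = S.br1 (D0 x) f + S.br1 x (D1 f)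
  der_sq : ∀ f, D0 (S.sq f) = S.br11 (D1 f) f

/-- An odd derivation of a Lie superalgebra in characteristic 2. -/
structure OddDer (S : SuperAlg K g0 g1) : Type where
  D0 : g0 →ₗ[K] g1
  D1 : g1 →ₗ[K] g0
  der0 : ∀ x y, D0 (S.br0 x y) = S.br1 x (D0 y) + S.br1 y (D0 x)
  der1 : ∀ x f, D1 (S.br1 x f) = S.br11 (D0 x) f + S.br0 x (D1 f)
  der_sq : ∀ f, D0 (S.sq f) = S.br1 (D1 f) f

/-- An isometry between Lie superalgebras endowed with even NIS forms: an even
linear bijection preserving brackets, squarings and the bilinear forms. -/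
structure EvenIsometry (S : SuperAlg K g0 g1) (N : EvenNIS K g0 g1 S)
    (S' : SuperAlg K h0 h1) (N' : EvenNIS K h0 h1 S') : Type where
  e0 : g0 ≃ₗ[K] h0
  e1 : g1 ≃ₗ[K] h1
  map_br0 : ∀ x y, e0 (S.br0 x y) = S'.br0 (e0 x) (e0 y)
  map_br1 : ∀ x f, e1 (S.br1 x f) = S'.br1 (e0 x) (e1 f)
  map_br11 : ∀ f g, e0 (S.br11 f g) = S'.br11 (e1 f) (e1 g)
  map_sq : ∀ f, e0 (S.sq f) = S'.sq (e1 f)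
  map_B0 : ∀ x y, N'.B0 (e0 x) (e0 y) = N.B0 x y
  map_B1 : ∀ f g, N'.B1 (e1 f) (e1 g) = N.B1 f g

/-- An isometry between Lie superalgebras endowed with odd NIS forms. -/
structure OddIsometry (S : SuperAlg K g0 g1) (N : OddNIS K g0 g1 S)
    (S' : SuperAlg K h0 h1) (N' : OddNIS K h0 h1 S') : Type where
  e0 : g0 ≃ₗ[K] h0
  e1 : g1 ≃ₗ[K] h1
  map_br0 : ∀ x y, e0 (S.br0 x y) = S'.br0 (e0 x) (e0 y)
  map_br1 : ∀ x f, e1 (S.br1 x f) = S'.br1 (e0 x) (e1 f)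
  map_br11 : ∀ f g, e0 (S.br11 f g) = S'.br11 (e1 f) (e1 g)
  map_sq : ∀ f, e0 (S.sq f) = S'.sq (e1 f)
  map_Bo : ∀ x f, N'.Bo (e0 x) (e1 f) = N.Bo x f

/-- A (graded) ideal of a Lie superalgebra in characteristic 2, given by its
even part `I0` and odd part `I1`. -/
def IsIdealPair (S : SuperAlg K g0 g1) (I0 : Submodule K g0) (I1 : Submodule K g1) : Prop :=
  (∀ x ∈ I0, ∀ y, S.br0 x y ∈ I0) ∧ (∀ x ∈ I0, ∀ f, S.br1 x f ∈ I1) ∧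
  (∀ f ∈ I1, ∀ x : g0, S.br1 x f ∈ I1) ∧ (∀ f ∈ I1, ∀ g, S.br11 f g ∈ I0) ∧
  (∀ f ∈ I1, S.sq f ∈ I0)

/-- Irreducibility of a NIS-Lie superalgebra with an even form: it is not the
direct sum of two nonzero mutually orthogonal ideals. -/
def EvenIrreducible (S : SuperAlg K g0 g1) (N : EvenNIS K g0 g1 S) : Prop :=
  ¬ ∃ (I0 J0 : Submodule K g0) (I1 J1 : Submodule K g1),
      IsIdealPair K g0 g1 S I0 I1 ∧ IsIdealPair K g0 g1 S J0 J1 ∧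
      (I0 ≠ ⊥ ∨ I1 ≠ ⊥) ∧ (J0 ≠ ⊥ ∨ J1 ≠ ⊥) ∧
      I0 ⊓ J0 = ⊥ ∧ I0 ⊔ J0 = ⊤ ∧ I1 ⊓ J1 = ⊥ ∧ I1 ⊔ J1 = ⊤ ∧
      (∀ x ∈ I0, ∀ y ∈ J0, N.B0 x y = 0) ∧ (∀ f ∈ I1, ∀ g ∈ J1, N.B1 f g = 0)

/-- Irreducibility of a NIS-Lie superalgebra with an odd form. -/
def OddIrreducible (S : SuperAlg K g0 g1) (N : OddNIS K g0 g1 S) : Prop :=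
  ¬ ∃ (I0 J0 : Submodule K g0) (I1 J1 : Submodule K g1),
      IsIdealPair K g0 g1 S I0 I1 ∧ IsIdealPair K g0 g1 S J0 J1 ∧
      (I0 ≠ ⊥ ∨ I1 ≠ ⊥) ∧ (J0 ≠ ⊥ ∨ J1 ≠ ⊥) ∧
      I0 ⊓ J0 = ⊥ ∧ I0 ⊔ J0 = ⊤ ∧ I1 ⊓ J1 = ⊥ ∧ I1 ⊔ J1 = ⊤ ∧
      (∀ x ∈ I0, ∀ g ∈ J1, N.Bo x g = 0) ∧ (∀ y ∈ J0, ∀ f ∈ I1, N.Bo y f = 0)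

/-- An ideal of a Lie superalgebra given as a pair of subsets (closed under the
vector space operations, brackets with arbitrary elements, and the squaring). -/
def IsIdealSet (S : SuperAlg K g0 g1) (I0 : Set g0) (I1 : Set g1) : Prop :=
  ((0 : g0) ∈ I0) ∧ (∀ x y, x ∈ I0 → y ∈ I0 → x + y ∈ I0) ∧
  (∀ (c : K) x, x ∈ I0 → c • x ∈ I0) ∧
  ((0 : g1) ∈ I1) ∧ (∀ f g, f ∈ I1 → g ∈ I1 → f + g ∈ I1) ∧
  (∀ (c : K) f, f ∈ I1 → c • f ∈ I1) ∧
  (∀ x ∈ I0, ∀ y, S.br0 x y ∈ I0) ∧ (∀ x ∈ I0, ∀ f, S.br1 x f ∈ I1) ∧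
  (∀ f ∈ I1, ∀ x : g0, S.br1 x f ∈ I1) ∧ (∀ f ∈ I1, ∀ g, S.br11 f g ∈ I0) ∧
  (∀ f ∈ I1, S.sq f ∈ I0)

/-- The even part of the center of a Lie superalgebra. -/
def zEven (S : SuperAlg K g0 g1) : Submodule K g0 :=
  (⨅ y : g0, LinearMap.ker (S.br0.flip y)) ⊓ (⨅ f : g1, LinearMap.ker (S.br1.flip f))

/-- The odd part of the center of a Lie superalgebra. -/
def zOdd (S : SuperAlg K g0 g1) : Submodule K g1 :=
  (⨅ x : g0, LinearMap.ker (S.br1 x)) ⊓ (⨅ g : g1, LinearMap.ker (S.br11.flip g))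

/-- The compatibility conditions between an even NIS `N`, an even derivation `D`
and a quadratic form `al` on the odd part, entering the `D_ev`-extension (even
form case): `B(Du,v)+B(u,Dv)=0`, `B(Du,u)=0` for even `u`, `al` is quadratic and
its polar form is `B(·,D·)`. -/
def DevDataEven (S : SuperAlg K g0 g1) (N : EvenNIS K g0 g1 S)
    (D : EvenDer K g0 g1 S) (al : g1 → K) : Prop :=
  (∀ x y : g0, N.B0 (D.D0 x) y + N.B0 x (D.D0 y) = 0) ∧
  (∀ f g : g1, N.B1 (D.D1 f) g + N.B1 f (D.D1 g) = 0) ∧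
  (∀ x : g0, N.B0 (D.D0 x) x = 0) ∧
  (∀ (c : K) (f : g1), al (c • f) = c * c * al f) ∧
  (∀ f g : g1, N.B1 f (D.D1 g) = al (f + g) - al f - al g)

/-- The structure constants of the `D_ev`-extension `g = Kx ⊕ a ⊕ Kx*` (even
form, even `x`, `x*`); an element of the even part is written `(r, u, s)` for
`r x + u + s x*`, and the constant `c` is the (arbitrary) value `B_g(x*,x*)`. -/
def DevExtEvenFormulas (S : SuperAlg K g0 g1) (N : EvenNIS K g0 g1 S)
    (D : EvenDer K g0 g1 S) (al : g1 → K) (c : K)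
    (T : SuperAlg K (K × g0 × K) g1) (M : EvenNIS K (K × g0 × K) g1 T) : Prop :=
  (∀ (r s r' s' : K) (u u' : g0),
      T.br0 (r, u, s) (r', u', s')
        = (N.B0 (D.D0 u) u', S.br0 u u' + s • D.D0 u' + s' • D.D0 u, 0)) ∧
  (∀ (r s : K) (u : g0) (f : g1), T.br1 (r, u, s) f = S.br1 u f + s • D.D1 f) ∧
  (∀ f : g1, T.sq f = (al f, S.sq f, 0)) ∧
  (∀ (r s r' s' : K) (u u' : g0),
      M.B0 (r, u, s) (r', u', s') = N.B0 u u' + r * s' + r' * s + c * (s * s')) ∧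
  (∀ f g : g1, M.B1 f g = N.B1 f g)

/-- The compatibility conditions between an even NIS `N`, an odd derivation `D`
and an even element `w = a₀`, entering the `D_od`-extension (even form case):
`B(Du,v) = B(u,Dv)`, `D² = ad_w`, `D(w) = 0`. -/
def DodDataEven (S : SuperAlg K g0 g1) (N : EvenNIS K g0 g1 S)
    (D : OddDer K g0 g1 S) (w : g0) : Prop :=
  (∀ (x : g0) (f : g1), N.B1 (D.D0 x) f = N.B0 x (D.D1 f)) ∧
  (∀ x : g0, D.D1 (D.D0 x) = S.br0 w x) ∧
  (∀ f : g1, D.D0 (D.D1 f) = S.br1 w f) ∧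
  D.D0 w = 0

/-- The structure constants of the `D_od`-extension `g = Kx ⊕ a ⊕ Kx*` (even
form, odd `x`, `x*`); an element of the odd part is written `(r, u, t)` for
`r x + u + t x*`. -/
def DodExtEvenFormulas (S : SuperAlg K g0 g1) (N : EvenNIS K g0 g1 S)
    (D : OddDer K g0 g1 S) (w : g0)
    (T : SuperAlg K g0 (K × g1 × K)) (M : EvenNIS K g0 (K × g1 × K) T) : Prop :=
  (∀ x y : g0, T.br0 x y = S.br0 x y) ∧
  (∀ (x : g0) (r t : K) (u : g1),
      T.br1 x (r, u, t) = (N.B1 (D.D0 x) u, S.br1 x u + t • D.D0 x, 0)) ∧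
  (∀ (r t : K) (u : g1), T.sq (r, u, t) = S.sq u + (t * t) • w + t • D.D1 u) ∧
  (∀ x y : g0, M.B0 x y = N.B0 x y) ∧
  (∀ (r t r' t' : K) (u u' : g1),
      M.B1 (r, u, t) (r', u', t') = N.B1 u u' + r * t' + r' * t)

/-- The compatibility conditions between an odd NIS `No`, an odd derivation `D`,
an even element `w = a₀` and a quadratic form `al`, entering the
`D_od`-extension (odd form case). -/
def DodDataOdd (S : SuperAlg K g0 g1) (No : OddNIS K g0 g1 S)
    (D : OddDer K g0 g1 S) (w : g0) (al : g1 → K) : Prop :=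
  (∀ x y : g0, No.Bo y (D.D0 x) + No.Bo x (D.D0 y) = 0) ∧
  (∀ f g : g1, No.Bo (D.D1 f) g + No.Bo (D.D1 g) f = 0) ∧
  (∀ x : g0, No.Bo x (D.D0 x) = 0) ∧
  (∀ x : g0, D.D1 (D.D0 x) = S.br0 w x) ∧
  (∀ f : g1, D.D0 (D.D1 f) = S.br1 w f) ∧
  D.D0 w = 0 ∧
  (∀ (c : K) (f : g1), al (c • f) = c * c * al f) ∧
  (∀ f g : g1, al (f + g) - al f - al g = No.Bo (D.D1 f) g)

/-- The structure constants of the `D_od`-extension `g = Kx ⊕ a ⊕ Ke` (odd form,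
even `x`, odd `e`); an even element is written `(r, u)` for `r x + u`, an odd
element `(v, μ)` for `v + μ e`. -/
def DodExtOddFormulas (S : SuperAlg K g0 g1) (No : OddNIS K g0 g1 S)
    (D : OddDer K g0 g1 S) (w : g0) (al : g1 → K) (m : K)
    (T : SuperAlg K (K × g0) (g1 × K)) (M : OddNIS K (K × g0) (g1 × K) T) : Prop :=
  (∀ (r r' : K) (x y : g0), T.br0 (r, x) (r', y) = (No.Bo y (D.D0 x), S.br0 x y)) ∧
  (∀ (r μ : K) (x : g0) (v : g1), T.br1 (r, x) (v, μ) = (S.br1 x v + μ • D.D0 x, 0)) ∧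
  (∀ (μ : K) (v : g1),
      T.sq (v, μ) = (μ * μ * m + al v, S.sq v + (μ * μ) • w + μ • D.D1 v)) ∧
  (∀ (r μ : K) (x : g0) (v : g1), M.Bo (r, x) (v, μ) = No.Bo x v + r * μ)

/-- The compatibility condition between an odd NIS `No` and an even derivation
`D`, entering the `D_ev`-extension (odd form case): `B(Du,v)+B(u,Dv)=0`. -/
def DevDataOdd (S : SuperAlg K g0 g1) (No : OddNIS K g0 g1 S)
    (D : EvenDer K g0 g1 S) : Prop :=
  ∀ (x : g0) (v : g1), No.Bo (D.D0 x) v + No.Bo x (D.D1 v) = 0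

/-- The structure constants of the `D_ev`-extension `g = Kx ⊕ a ⊕ Ke` (odd form,
odd `x`, even `e`); an even element is written `(u, ν)` for `u + ν e`, an odd
element `(μ, v)` for `μ x + v`. -/
def DevExtOddFormulas (S : SuperAlg K g0 g1) (No : OddNIS K g0 g1 S)
    (D : EvenDer K g0 g1 S)
    (T : SuperAlg K (g0 × K) (K × g1)) (M : OddNIS K (g0 × K) (K × g1) T) : Prop :=
  (∀ (ν ν' : K) (x y : g0),
      T.br0 (x, ν) (y, ν') = (S.br0 x y + ν • D.D0 y + ν' • D.D0 x, 0)) ∧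
  (∀ (ν μ : K) (x : g0) (v : g1),
      T.br1 (x, ν) (μ, v) = (No.Bo (D.D0 x) v, S.br1 x v + ν • D.D1 v)) ∧
  (∀ (μ : K) (v : g1), T.sq (μ, v) = (S.sq v, 0)) ∧
  (∀ (ν μ : K) (x : g0) (v : g1), M.Bo (x, ν) (μ, v) = No.Bo x v + ν * μ)

end Defs

end Char2DoubleExt

namespace Char2DoubleExt

/-!
In characteristic 2 the extension is built in two steps. First adjoin `x*` by the semidirect
product of `a` with `D`; then adjoin `x` by a central extension. The cocycle of the second step
is `B(D u, v)` on even elements and `α` on odd ones: because `D` is a derivation and is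
self-adjoint for the invariant form `B`, this is a `2`-cocycle of `a`. It is moreover invariant
under `D`, and that is what allows it to be extended by zero to the semidirect product.
-/

section DoubleExtension

variable {K : Type} [Field K] {g0 g1 V : Type}
variable [AddCommGroup g0] [Module K g0] [AddCommGroup g1] [Module K g1]
variable [AddCommGroup V] [Module K V]
variable {S : SuperAlg K g0 g1}

variable (K) in
theorem add_self_eq_zero_of_charTwo [CharP K 2] (v : V) : v + v = 0 := by
  rw [← two_smul K v, CharTwo.two_eq_zero, zero_smul]

theorem apply_comm_of_isAlt_of_charTwo [CharP K 2] {B : g0 →ₗ[K] g0 →ₗ[K] V} (hB : B.IsAlt)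
    (x y : g0) : B x y = B y x := by
  rw [← hB.neg x y, eq_neg_iff_add_eq_zero, add_self_eq_zero_of_charTwo K]

namespace SuperAlg

theorem br0_comm [CharP K 2] (S : SuperAlg K g0 g1) (x y : g0) : S.br0 x y = S.br0 y x :=
  apply_comm_of_isAlt_of_charTwo S.br0_self x y

end SuperAlg

namespace EvenDer

theorem map_br11 (D : EvenDer K g0 g1 S) (f g : g1) :
    D.D0 (S.br11 f g) = S.br11 (D.D1 f) g + S.br11 f (D.D1 g) := by
  have h := D.der_sq (f + g)
  simp only [S.sq_add, map_add, LinearMap.add_apply, D.der_sq] at h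
  rw [S.br11_comm f (D.D1 g)]
  linear_combination (norm := module) h

/-- The bracket of the even part `g0 ⊕ K d` of the semidirect product `S ⋊ K d`, where `d` acts
by `D`; the pair `(u, s)` stands for `u + s d`. -/
def semidirectBr0 (D : EvenDer K g0 g1 S) : (g0 × K) →ₗ[K] (g0 × K) →ₗ[K] (g0 × K) :=
  LinearMap.mk₂ K (fun p q => (S.br0 p.1 q.1 + p.2 • D.D0 q.1 + q.2 • D.D0 p.1, 0))
    (fun _ _ _ => by
      ext <;> simp only [Prod.fst_add, Prod.snd_add, map_add, LinearMap.add_apply, add_zero]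
      module)
    (fun _ _ _ => by
      ext <;> simp only [Prod.smul_fst, Prod.smul_snd, map_smul, LinearMap.smul_apply, smul_zero]
      module)
    (fun _ _ _ => by
      ext <;> simp only [Prod.fst_add, Prod.snd_add, map_add, add_zero]
      module)
    (fun _ _ _ => by
      ext <;> simp only [Prod.smul_fst, Prod.smul_snd, map_smul, smul_zero]
      module)

/-- The action of the even part of the semidirect product `S ⋊ K d` on its odd part `g1`. -/
def semidirectBr1 (D : EvenDer K g0 g1 S) : (g0 × K) →ₗ[K] g1 →ₗ[K] g1 :=
  S.br1.coprod (LinearMap.toSpanSingleton K _ D.D1)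

theorem semidirectBr0_apply (D : EvenDer K g0 g1 S) (u v : g0) (s t : K) :
    D.semidirectBr0 (u, s) (v, t) = (S.br0 u v + s • D.D0 v + t • D.D0 u, 0) :=
  rfl

theorem semidirectBr1_apply (D : EvenDer K g0 g1 S) (u : g0) (s : K) (f : g1) :
    D.semidirectBr1 (u, s) f = S.br1 u f + s • D.D1 f :=
  rfl

variable [CharP K 2]

theorem semidirectBr0_self (D : EvenDer K g0 g1 S) (p : g0 × K) : D.semidirectBr0 p p = 0 := by
  obtain ⟨u, s⟩ := p
  rw [semidirectBr0_apply, S.br0_self, zero_add, add_self_eq_zero_of_charTwo K, Prod.mk_zero_zero]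

theorem semidirectBr0_jacobi (D : EvenDer K g0 g1 S) (p q r : g0 × K) :
    D.semidirectBr0 p (D.semidirectBr0 q r) + D.semidirectBr0 q (D.semidirectBr0 r p)
      + D.semidirectBr0 r (D.semidirectBr0 p q) = 0 := by
  obtain ⟨⟨u, s⟩, ⟨v, t⟩, ⟨w, l⟩⟩ := p, q, r
  have two : (2 : K) = 0 := CharTwo.two_eq_zero
  simp only [semidirectBr0_apply, Prod.mk_add_mk, Prod.mk_eq_zero, map_add, map_smul, D.der0,
    zero_smul, add_zero, and_true, S.br0_comm (D.D0 u) v, S.br0_comm (D.D0 v) w,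
    S.br0_comm (D.D0 w) u]
  -- Every term outside the Jacobi sum of `u, v, w` occurs twice.
  linear_combination (norm := module) S.jacobi0 u v w + two • (
    s • (S.br0 w (D.D0 v) + S.br0 v (D.D0 w)) + t • (S.br0 w (D.D0 u) + S.br0 u (D.D0 w))
    + l • (S.br0 u (D.D0 v) + S.br0 v (D.D0 u)) + (s * t) • D.D0 (D.D0 w)
    + (s * l) • D.D0 (D.D0 v) + (t * l) • D.D0 (D.D0 u))

theorem semidirectBr1_br0 (D : EvenDer K g0 g1 S) (p q : g0 × K) (f : g1) :
    D.semidirectBr1 (D.semidirectBr0 p q) f =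
      D.semidirectBr1 p (D.semidirectBr1 q f) + D.semidirectBr1 q (D.semidirectBr1 p f) := by
  obtain ⟨⟨u, s⟩, ⟨v, t⟩⟩ := p, q
  have two : (2 : K) = 0 := CharTwo.two_eq_zero
  simp only [semidirectBr0_apply, semidirectBr1_apply, map_add, map_smul, LinearMap.add_apply,
    LinearMap.smul_apply, S.act_br, D.der1, zero_smul, add_zero]
  linear_combination (norm := module) -two • (t • S.br1 u (D.D1 f) + s • S.br1 v (D.D1 f)
    + (s * t) • D.D1 (D.D1 f))

/-- The semidirect product `S ⋊ K d` of a Lie superalgebra with an even element `d` acting by the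
even derivation `D`. -/
def semidirect (D : EvenDer K g0 g1 S) : SuperAlg K (g0 × K) g1 where
  br0 := D.semidirectBr0
  br1 := D.semidirectBr1
  br11 := S.br11.compr₂ (LinearMap.inl K g0 K)
  sq f := (S.sq f, 0)
  sq_smul c f := by simp [S.sq_smul]
  sq_add f g := by simp [S.sq_add]
  br0_self := D.semidirectBr0_self
  br11_comm f g := by simp [S.br11_comm f g]
  jacobi0 := D.semidirectBr0_jacobi
  act_br := D.semidirectBr1_br0
  jacobi_mix := by
    rintro ⟨u, s⟩ f g
    refine Prod.ext ?_ (by simp [semidirectBr0_apply])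
    simp only [LinearMap.compr₂_apply, LinearMap.inl_apply, semidirectBr0_apply,
      semidirectBr1_apply, Prod.fst_add, Prod.smul_fst, Prod.fst_zero, map_add, map_smul,
      zero_smul, add_zero, D.map_br11, S.br11_comm g (D.D1 f)]
    linear_combination (norm := module) S.jacobi_mix u f g
      + (CharTwo.two_eq_zero : (2 : K) = 0) • (s • S.br11 (D.D1 f) g + s • S.br11 f (D.D1 g))
  sq_br0 := by
    rintro f ⟨u, s⟩
    simp [semidirectBr0_apply, semidirectBr1_apply, S.sq_br0, D.der_sq, S.br11_comm f (D.D1 f)]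
  sq_br1 f g := by simp [semidirectBr1_apply, S.sq_br1]

end EvenDer

/-- An even `2`-cocycle of a Lie superalgebra in characteristic 2 with values in a trivial module
`V`: a bilinear map `form` on the even part together with a quadratic map `quad` on the odd part,
whose polar form is the value of the cocycle on two odd elements. -/
structure TwoCocycle (S : SuperAlg K g0 g1) (V : Type) [AddCommGroup V] [Module K V] where
  form : g0 →ₗ[K] g0 →ₗ[K] V
  quad : QuadraticMap K g1 V
  form_self : ∀ x, form x x = 0
  form_br0 : ∀ x y z, form x (S.br0 y z) + form y (S.br0 z x) + form z (S.br0 x y) = 0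
  form_sq : ∀ f x, form (S.sq f) x = quad.polarBilin f (S.br1 x f)

namespace TwoCocycle

theorem form_br11 [CharP K 2] (ω : TwoCocycle S V) (x : g0) (f g : g1) :
    ω.form x (S.br11 f g) + ω.quad.polarBilin f (S.br1 x g) + ω.quad.polarBilin g (S.br1 x f)
      = 0 := by
  have polarized : ω.form (S.br11 f g) x =
      ω.quad.polarBilin f (S.br1 x g) + ω.quad.polarBilin g (S.br1 x f) := by
    have h := ω.form_sq (f + g) x
    simp only [S.sq_add, map_add, LinearMap.add_apply, ω.form_sq] at h
    linear_combination (norm := module) h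
  rw [apply_comm_of_isAlt_of_charTwo ω.form_self, polarized, add_assoc,
    add_self_eq_zero_of_charTwo K]

/-- The central extension of `S` by `V` defined by the `2`-cocycle `ω`; the pair `(v, x)` stands
for `v + x`. -/
def centralExtension [CharP K 2] (ω : TwoCocycle S V) : SuperAlg K (V × g0) g1 where
  br0 := LinearMap.mk₂ K (fun p q => (ω.form p.2 q.2, S.br0 p.2 q.2))
    (by simp) (by simp) (by simp) (by simp)
  br1 := S.br1 ∘ₗ LinearMap.snd K V g0
  br11 := LinearMap.mk₂ K (fun f g => (ω.quad.polarBilin f g, S.br11 f g))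
    (by simp) (by simp) (by simp) (by simp)
  sq f := (ω.quad f, S.sq f)
  sq_smul c f := by simp [S.sq_smul, ω.quad.map_smul]
  sq_add f g := by simp [S.sq_add, QuadraticMap.polar]
  br0_self p := by simp [ω.form_self, S.br0_self]
  br11_comm f g := Prod.ext (QuadraticMap.polar_comm ω.quad f g) (S.br11_comm f g)
  jacobi0 p q r := Prod.ext (ω.form_br0 p.2 q.2 r.2) (S.jacobi0 p.2 q.2 r.2)
  act_br p q f := S.act_br p.2 q.2 f
  jacobi_mix p f g := Prod.ext (ω.form_br11 p.2 f g) (S.jacobi_mix p.2 f g)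
  sq_br0 f p := Prod.ext (ω.form_sq f p.2) (S.sq_br0 f p.2)
  sq_br1 f g := S.sq_br1 f g

/-- The extension by zero of a `2`-cocycle to the semidirect product with a derivation leaving it
invariant. -/
def extendSemidirect [CharP K 2] (ω : TwoCocycle S V) (D : EvenDer K g0 g1 S)
    (form_invariant : ∀ x y, ω.form (D.D0 x) y + ω.form x (D.D0 y) = 0)
    (quad_invariant : ∀ f, ω.quad.polarBilin f (D.D1 f) = 0) :
    TwoCocycle D.semidirect V where
  form := ω.form.compl₁₂ (LinearMap.fst K g0 K) (LinearMap.fst K g0 K)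
  quad := ω.quad
  form_self p := ω.form_self p.1
  form_br0 := by
    rintro ⟨u, s⟩ ⟨v, t⟩ ⟨w, l⟩
    have D_comm (x y : g0) : ω.form x (D.D0 y) + ω.form y (D.D0 x) = 0 := by
      rw [apply_comm_of_isAlt_of_charTwo ω.form_self y, add_comm, form_invariant]
    simp only [EvenDer.semidirect, EvenDer.semidirectBr0_apply, LinearMap.compl₁₂_apply,
      LinearMap.fst_apply, map_add, map_smul]
    linear_combination (norm := module)
      ω.form_br0 u v w + s • D_comm v w + t • D_comm u w + l • D_comm u v
  form_sq := by
    rintro f ⟨u, s⟩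
    simp only [EvenDer.semidirect, EvenDer.semidirectBr1_apply, LinearMap.compl₁₂_apply,
      LinearMap.fst_apply, map_add, map_smul, ω.form_sq, quad_invariant, smul_zero, add_zero]

end TwoCocycle

namespace EvenNIS

/-- The form on `K x ⊕ g0 ⊕ K x*` which extends `B0`, makes `x, x*` a hyperbolic pair orthogonal
to `g0`, and takes the value `c` at `(x*, x*)`. -/
def doubleExtensionForm (N : EvenNIS K g0 g1 S) (c : K) :
    (K × g0 × K) →ₗ[K] (K × g0 × K) →ₗ[K] K :=
  LinearMap.mk₂ K
    (fun p q => N.B0 p.2.1 q.2.1 + p.1 * q.2.2 + q.1 * p.2.2 + c * (p.2.2 * q.2.2))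
    (fun _ _ _ => by
      simp only [Prod.fst_add, Prod.snd_add, map_add, LinearMap.add_apply]
      ring)
    (fun _ _ _ => by
      simp only [Prod.smul_fst, Prod.smul_snd, map_smul, LinearMap.smul_apply, smul_eq_mul]
      ring)
    (fun _ _ _ => by
      simp only [Prod.fst_add, Prod.snd_add, map_add]
      ring)
    (fun _ _ _ => by
      simp only [Prod.smul_fst, Prod.smul_snd, map_smul, smul_eq_mul]
      ring)

theorem doubleExtensionForm_apply (N : EvenNIS K g0 g1 S) (c r s r' s' : K) (u u' : g0) :
    N.doubleExtensionForm c (r, u, s) (r', u', s') =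
      N.B0 u u' + r * s' + r' * s + c * (s * s') :=
  rfl

theorem doubleExtensionForm_comm (N : EvenNIS K g0 g1 S) (c : K) (p q : K × g0 × K) :
    N.doubleExtensionForm c p q = N.doubleExtensionForm c q p := by
  obtain ⟨⟨r, u, s⟩, ⟨r', u', s'⟩⟩ := p, q
  simp only [doubleExtensionForm_apply]
  linear_combination N.symm0 u u'

theorem eq_zero_of_doubleExtensionForm_eq_zero (N : EvenNIS K g0 g1 S) (c : K) (p : K × g0 × K)
    (hp : ∀ q, N.doubleExtensionForm c p q = 0) : p = 0 := by
  obtain ⟨r, u, s⟩ := p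
  have hs : s = 0 := by simpa [doubleExtensionForm_apply] using hp (1, 0, 0)
  have hr : r = 0 := by simpa [doubleExtensionForm_apply, hs] using hp (0, 0, 1)
  have hu : u = 0 := N.nondeg0 u fun v => by
    simpa [doubleExtensionForm_apply, hs] using hp (0, v, 0)
  simp [hr, hu, hs]

end EvenNIS

namespace DevDataEven

variable {N : EvenNIS K g0 g1 S} {D : EvenDer K g0 g1 S} {al : g1 → K}

/-- The form `α` of the data of a `D_ev`-extension, as a bundled quadratic form. -/
def quadraticForm (h : DevDataEven K g0 g1 S N D al) : QuadraticForm K g1 where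
  toFun := al
  toFun_smul := h.2.2.2.1
  exists_companion' := ⟨N.B1.compl₂ D.D1, fun f g => by
    rw [LinearMap.compl₂_apply, h.2.2.2.2]
    ring⟩

theorem polarBilin_quadraticForm (h : DevDataEven K g0 g1 S N D al) (f g : g1) :
    h.quadraticForm.polarBilin f g = N.B1 f (D.D1 g) :=
  (h.2.2.2.2 f g).symm

theorem B0_D0_self (h : DevDataEven K g0 g1 S N D al) (x : g0) : N.B0 (D.D0 x) x = 0 :=
  h.2.2.1 x

variable [CharP K 2]

theorem B0_D0_left (h : DevDataEven K g0 g1 S N D al) (x y : g0) :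
    N.B0 (D.D0 x) y = N.B0 x (D.D0 y) :=
  CharTwo.add_eq_zero.mp (h.1 x y)

theorem B1_D1_left (h : DevDataEven K g0 g1 S N D al) (f g : g1) :
    N.B1 (D.D1 f) g = N.B1 f (D.D1 g) :=
  CharTwo.add_eq_zero.mp (h.2.1 f g)

theorem B0_D0_br0_cyclic (h : DevDataEven K g0 g1 S N D al) (x y z : g0) :
    N.B0 (D.D0 x) (S.br0 y z) + N.B0 (D.D0 y) (S.br0 z x) + N.B0 (D.D0 z) (S.br0 x y) = 0 := by
  have hx : N.B0 (D.D0 x) (S.br0 y z) = N.B0 (S.br0 (D.D0 x) y) z := (N.inv0 _ _ _).symm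
  have hy : N.B0 (D.D0 y) (S.br0 z x) = N.B0 (S.br0 x (D.D0 y)) z := by
    rw [S.br0_comm z x, ← N.inv0, S.br0_comm]
  have hz : N.B0 (D.D0 z) (S.br0 x y) =
      N.B0 (S.br0 (D.D0 x) y) z + N.B0 (S.br0 x (D.D0 y)) z := by
    rw [N.symm0, ← h.B0_D0_left, D.der0, map_add, LinearMap.add_apply]
  rw [hx, hy, hz, CharTwo.add_self_eq_zero]

theorem B0_D0_sq (h : DevDataEven K g0 g1 S N D al) (f : g1) (x : g0) :
    N.B0 (D.D0 (S.sq f)) x = N.B1 f (D.D1 (S.br1 x f)) := by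
  rw [D.der_sq, N.inv2, h.B1_D1_left]

/-- The `2`-cocycle given by `B(D u, v)` on even elements and by `α` on odd ones. -/
def cocycle (h : DevDataEven K g0 g1 S N D al) : TwoCocycle S K where
  form := N.B0 ∘ₗ D.D0
  quad := h.quadraticForm
  form_self := h.B0_D0_self
  form_br0 := h.B0_D0_br0_cyclic
  form_sq f x := by
    rw [polarBilin_quadraticForm]
    exact h.B0_D0_sq f x

theorem cocycle_form_invariant (h : DevDataEven K g0 g1 S N D al) (x y : g0) :
    h.cocycle.form (D.D0 x) y + h.cocycle.form x (D.D0 y) = 0 :=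
  h.1 (D.D0 x) y

theorem cocycle_quad_invariant (h : DevDataEven K g0 g1 S N D al) (f : g1) :
    h.cocycle.quad.polarBilin f (D.D1 f) = 0 := by
  rw [cocycle, polarBilin_quadraticForm, ← h.B1_D1_left, N.alt1]

/-- The Lie superalgebra `K x ⊕ a ⊕ K x*` underlying the `D_ev`-extension. -/
def extension (h : DevDataEven K g0 g1 S N D al) : SuperAlg K (K × g0 × K) g1 :=
  (h.cocycle.extendSemidirect D h.cocycle_form_invariant
    h.cocycle_quad_invariant).centralExtension

theorem extension_br0 (h : DevDataEven K g0 g1 S N D al) (r s r' s' : K) (u u' : g0) :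
    h.extension.br0 (r, u, s) (r', u', s') =
      (N.B0 (D.D0 u) u', S.br0 u u' + s • D.D0 u' + s' • D.D0 u, 0) :=
  rfl

theorem extension_br1 (h : DevDataEven K g0 g1 S N D al) (r s : K) (u : g0) (f : g1) :
    h.extension.br1 (r, u, s) f = S.br1 u f + s • D.D1 f :=
  rfl

theorem extension_br11 (h : DevDataEven K g0 g1 S N D al) (f g : g1) :
    h.extension.br11 f g = (N.B1 f (D.D1 g), S.br11 f g, 0) :=
  Prod.ext (h.polarBilin_quadraticForm f g) rfl

theorem extension_sq (h : DevDataEven K g0 g1 S N D al) (f : g1) :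
    h.extension.sq f = (al f, S.sq f, 0) :=
  rfl

/-- The invariant form of the `D_ev`-extension with the value `c` at `(x*, x*)`. -/
def extensionNIS (h : DevDataEven K g0 g1 S N D al) (c : K) :
    EvenNIS K (K × g0 × K) g1 h.extension where
  B0 := N.doubleExtensionForm c
  B1 := N.B1
  symm0 := N.doubleExtensionForm_comm c
  symm1 := N.symm1
  alt1 := N.alt1
  nondeg0 := N.eq_zero_of_doubleExtensionForm_eq_zero c
  nondeg1 := N.nondeg1
  inv0 := by
    rintro ⟨r, u, s⟩ ⟨r', v, s'⟩ ⟨r'', w, s''⟩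
    simp only [extension_br0, EvenNIS.doubleExtensionForm_apply, map_add, map_smul,
      LinearMap.add_apply, LinearMap.smul_apply, smul_eq_mul, h.B0_D0_left]
    linear_combination N.inv0 u v w
  inv1 := by
    rintro ⟨r, u, s⟩ f g
    simp only [extension_br1, extension_br11, EvenNIS.doubleExtensionForm_apply, map_add, map_smul,
      LinearMap.add_apply, LinearMap.smul_apply, smul_eq_mul, h.B1_D1_left]
    linear_combination N.inv1 u f g
  inv2 := by
    rintro f g ⟨r, u, s⟩
    simp only [extension_br1, extension_br11, EvenNIS.doubleExtensionForm_apply, map_add, map_smul,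
      smul_eq_mul]
    linear_combination N.inv2 f g u

end DevDataEven

end DoubleExtension

theorem stmt0_general (K : Type) [Field K] [CharP K 2] (a0 a1 : Type)
    [AddCommGroup a0] [Module K a0] [AddCommGroup a1] [Module K a1]
    (S : SuperAlg K a0 a1) (N : EvenNIS K a0 a1 S)
    (D : EvenDer K a0 a1 S) (al : a1 → K)
    (hdata : DevDataEven K a0 a1 S N D al)
    (c : K) :
    ∃ (T : SuperAlg K (K × a0 × K) a1) (M : EvenNIS K (K × a0 × K) a1 T),
      DevExtEvenFormulas K a0 a1 S N D al c T M :=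
  ⟨hdata.extension, hdata.extensionNIS c, hdata.extension_br0, hdata.extension_br1,
    hdata.extension_sq, N.doubleExtensionForm_apply c, fun _ _ => rfl⟩

/-- Theorem 3.1 of the paper: the `D_ev`-extension of a
NIS-Lie superalgebra `(a, B_a)` in characteristic 2 with `B_a` even, by means of
an even derivation `D` and a quadratic form `α`, is again a NIS-Lie superalgebra
with an even form: there is a Lie superalgebra structure on
`g = Kx ⊕ a ⊕ Kx*` (with `x`, `x*` even) together with an even, non-degenerate,
symmetric, invariant bilinear form, given by the prescribed formulas, for any
value `c` of `B_g(x*, x*)`. -/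
theorem stmt0 (K : Type) [Field K] [CharP K 2] (a0 a1 : Type)
    [AddCommGroup a0] [Module K a0] [AddCommGroup a1] [Module K a1]
    [FiniteDimensional K a0] [FiniteDimensional K a1]
    (S : SuperAlg K a0 a1) (N : EvenNIS K a0 a1 S)
    (D : EvenDer K a0 a1 S) (al : a1 → K)
    (hdata : DevDataEven K a0 a1 S N D al)
    (c : K) :
    ∃ (T : SuperAlg K (K × a0 × K) a1) (M : EvenNIS K (K × a0 × K) a1 T),
      DevExtEvenFormulas K a0 a1 S N D al c T M :=
  stmt0_general K a0 a1 S N D al hdata c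

end Char2DoubleExt
end

section
/- Let (a,B_a) be a NIS-Lie superalgebra over a field K of characteristic 2 with B_a even. Let D and D̃ be even derivations of a, and let α and α̃ be quadratic forms on a_1 whose polar forms satisfy B_α(u,v) = B_a(D(u),v) and B_{α̃}(u,v) = B_a(D̃(u),v) for all u,v ∈ a_1. Let π_0 be an even linear bijection of a preserving B_a (i.e. B_a(π_0(u),π_0(v)) = B_a(u,v) for all u,v), let λ ∈ K, and let t ∈ a_0. If α̃(π_0(u)) + λα(u) + B_a(t, s_a(u)) = 0 for all u ∈ a_1, then π_0^{-1}(D̃(π_0(u))) + λD(u) + [t,u] = 0 for all u ∈ a_1. -/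
/-!
For fixed `t`, invariance makes `u ↦ B_a(t, s_a(u))` a quadratic form on `a_1` with polar form
`B_a([t,u], v)`. Since `π₀` is an isometry, `α̃ ∘ π₀` has polar form `B_a(π₀⁻¹ D̃ π₀ u, v)`. Hence
the identity in the hypothesis polarizes to
`B_a(π₀⁻¹ D̃ π₀ u + λ D u + [t,u], v) = 0` for all `u` and `v`, and `B_a` is non-degenerate.
-/

namespace Char2DoubleExt

open QuadraticMap (polar)

section PolarOperator

variable {R V W : Type*} [CommRing R] [AddCommGroup V] [Module R V] [AddCommGroup W] [Module R W]
variable {B : LinearMap.BilinForm R V} {C : LinearMap.BilinForm R W}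
variable {q q' : V → R} {T T' : Module.End R V}

/-- `T` is a polar operator of `q` with respect to the bilinear form `B`: the polar form of `q` is
`(u, v) ↦ B (T u) v`. Here `q` is a bare function, so that sums, multiples and pullbacks of
quadratic forms given as functions can be polarized directly. -/
def HasPolarOperator (B : LinearMap.BilinForm R V) (q : V → R) (T : Module.End R V) : Prop :=
  ∀ u v, polar q u v = B (T u) v

namespace HasPolarOperator

theorem add (h : HasPolarOperator B q T) (h' : HasPolarOperator B q' T') :
    HasPolarOperator B (q + q') (T + T') := fun u v => by
  rw [QuadraticMap.polar_add, h, h', LinearMap.add_apply, map_add, LinearMap.add_apply]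

theorem smul (h : HasPolarOperator B q T) (c : R) : HasPolarOperator B (c • q) (c • T) :=
  fun u v => by
    rw [QuadraticMap.polar_smul, h, LinearMap.smul_apply, map_smul, LinearMap.smul_apply]

theorem comp_adjoint {q : W → R} {T : Module.End R W} (h : HasPolarOperator C q T)
    {p : V →ₗ[R] W} {p' : W →ₗ[R] V} (hp : LinearMap.IsAdjointPair C B p' p) :
    HasPolarOperator B (q ∘ p) (p' ∘ₗ T ∘ₗ p) := fun u v =>
  calc
    polar (q ∘ p) u v = polar q (p u) (p v) := by simp only [polar, Function.comp_apply, map_add]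
    _ = C (T (p u)) (p v) := h _ _
    _ = B (p' (T (p u))) v := (hp _ _).symm

theorem eq_zero (h : HasPolarOperator B 0 T) (hB : B.SeparatingLeft) : T = 0 := by
  ext u
  refine hB _ fun v => ?_
  rw [← h u v]
  simp only [polar, Pi.zero_apply, sub_zero]

end HasPolarOperator

theorem isAdjointPair_symm_of_isometry (e : V ≃ₗ[R] W) (he : ∀ u v, C (e u) (e v) = B u v) :
    LinearMap.IsAdjointPair C B e.symm e := fun w v => by
  rw [← he, e.apply_symm_apply]

end PolarOperator

section EvenNIS

variable {K a0 a1 : Type} [Field K] [AddCommGroup a0] [Module K a0] [AddCommGroup a1] [Module K a1]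
variable {S : SuperAlg K a0 a1}

theorem SuperAlg.polar_sq (S : SuperAlg K a0 a1) (u v : a1) : polar S.sq u v = S.br11 u v := by
  rw [polar, S.sq_add]
  abel

theorem EvenNIS.hasPolarOperator_sq (N : EvenNIS K a0 a1 S) (t : a0) :
    HasPolarOperator N.B1 (N.B0 t ∘ S.sq) (S.br1 t) := fun u v => by
  rw [QuadraticMap.polar_comp, S.polar_sq, N.inv1]

theorem stmt5_general {b1 : Type*} [AddCommGroup b1] [Module K b1] (N : EvenNIS K a0 a1 S)
    {C : LinearMap.BilinForm K b1} {D : Module.End K a1} {Dt : Module.End K b1}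
    {al : a1 → K} {alt : b1 → K}
    (hD : HasPolarOperator N.B1 al D) (hDt : HasPolarOperator C alt Dt)
    {p : a1 →ₗ[K] b1} {p' : b1 →ₗ[K] a1} (hp : LinearMap.IsAdjointPair C N.B1 p' p)
    (lam : K) (t : a0) (hyp : ∀ u, alt (p u) + lam * al u + N.B0 t (S.sq u) = 0) (u : a1) :
    p' (Dt (p u)) + lam • D u + S.br1 t u = 0 := by
  have hpolar : HasPolarOperator N.B1 (alt ∘ p + lam • al + N.B0 t ∘ S.sq)
      (p' ∘ₗ Dt ∘ₗ p + lam • D + S.br1 t) :=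
    ((hDt.comp_adjoint hp).add (hD.smul lam)).add (N.hasPolarOperator_sq t)
  have hzero : alt ∘ p + lam • al + N.B0 t ∘ S.sq = 0 := funext hyp
  rw [hzero] at hpolar
  exact LinearMap.congr_fun (hpolar.eq_zero N.nondeg1) u

end EvenNIS

/-- Lemma 3.11 of the paper: let `(a, B_a)` be a NIS-Lie
superalgebra in characteristic 2 with `B_a` even, `D`, `D̃` even derivations
with quadratic forms `α`, `α̃` on `a_1` whose polar forms are `B_a(D·,·)` and
`B_a(D̃·,·)`, let `π₀` be an even linear bijection of `a` preserving `B_a`,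
`λ ∈ K` and `t ∈ a_0`. If `α̃(π₀(u)) + λα(u) + B_a(t, s_a(u)) = 0` for all odd
`u`, then `π₀⁻¹(D̃(π₀(u))) + λD(u) + [t,u] = 0` for all odd `u`. -/
theorem stmt5 (K : Type) [Field K] [CharP K 2] (a0 a1 : Type)
    [AddCommGroup a0] [Module K a0] [AddCommGroup a1] [Module K a1]
    [FiniteDimensional K a0] [FiniteDimensional K a1]
    (S : SuperAlg K a0 a1) (N : EvenNIS K a0 a1 S)
    (D Dt : EvenDer K a0 a1 S) (al alt : a1 → K)
    (hal : ∀ (c : K) (f : a1), al (c • f) = c * c * al f)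
    (halt : ∀ (c : K) (f : a1), alt (c • f) = c * c * alt f)
    (hpol : ∀ f g : a1, al (f + g) - al f - al g = N.B1 (D.D1 f) g)
    (hpolt : ∀ f g : a1, alt (f + g) - alt f - alt g = N.B1 (Dt.D1 f) g)
    (e0 : a0 ≃ₗ[K] a0) (e1 : a1 ≃ₗ[K] a1)
    (he0 : ∀ x y : a0, N.B0 (e0 x) (e0 y) = N.B0 x y)
    (he1 : ∀ f g : a1, N.B1 (e1 f) (e1 g) = N.B1 f g)
    (lam : K) (t : a0)
    (hyp : ∀ u : a1, alt (e1 u) + lam * al u + N.B0 t (S.sq u) = 0) :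
    ∀ u : a1, e1.symm (Dt.D1 (e1 u)) + lam • D.D1 u + S.br1 t u = 0 := by
  exact stmt5_general N hpol hpolt (p := e1.toLinearMap) (p' := e1.symm.toLinearMap)
    (isAdjointPair_symm_of_isometry e1 he1) lam t hyp

end Char2DoubleExt
end

section
/- Let (a,B_a) be a NIS-Lie superalgebra over a field K of characteristic 2 with B_a even, and let (g,B_g) and (g̃,B_{g̃}) be D_ev-extensions of (a,B_a) by the pairs (D,α) and (D̃,α̃) respectively, with g = Kx ⊕ a ⊕ Kx* and g̃ = Kx̃ ⊕ a ⊕ Kx̃*. Suppose π_0 is an isometry of (a,B_a), λ ∈ K is nonzero, and t ∈ a_0 satisfy: α̃ = λ·(α∘π_0^{-1}) + B_a(t, s_a(π_0^{-1}(·))) on a_1; π_0^{-1}∘D̃∘π_0 = λD + ad_t on a_0; and B_g(x*,x*) = λ^{-2}(B_a(t,t) + B_{g̃}(x̃*,x̃*)). Then for any ν ∈ K, the map π : g → g̃ defined by π(u) = π_0(u) + B_a(t,u)x̃ for u ∈ a, π(x) = λx̃, and π(x*) = λ^{-1}(x̃* + π_0(t)) + νx̃, is an adapted isometry. -/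
namespace Char2DoubleExt

/-!
Let `E = λ D + ad_t` be the twist of `D`. The hypothesis on `D̃` says that `D̃ = π₀ E π₀⁻¹` on the
even part. On the odd part the same identity follows by polarizing the relation between the
quadratic forms and using nondegeneracy. In the coordinate `k = λ⁻¹ s` of `x*`, the map `π` shifts
the `a`-component `u` to `u + k t` and then applies `π₀`, so that everything reduces to identities
inside `a` about `E` and the shift `u ↦ u + k t`. There the stray terms in `t` vanish because the
bracket and `B(D·,·)` are alternating, or occur twice and cancel in characteristic 2.
-/

section

variable {K g0 g1 h0 h1 : Type} [Field K]
variable [AddCommGroup g0] [Module K g0] [AddCommGroup g1] [Module K g1]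
variable [AddCommGroup h0] [Module K h0] [AddCommGroup h1] [Module K h1]

namespace SuperAlg

variable (S : SuperAlg K g0 g1) (S' : SuperAlg K h0 h1)

theorem isAlt_br0 : S.br0.IsAlt := S.br0_self

theorem map_br11_of_map_sq {e0 : g0 →ₗ[K] h0} {e1 : g1 →ₗ[K] h1}
    (map_sq : ∀ f, e0 (S.sq f) = S'.sq (e1 f)) (f g : g1) :
    e0 (S.br11 f g) = S'.br11 (e1 f) (e1 g) := by
  have h := map_sq (f + g)
  rw [S.sq_add, map_add, map_add, map_add, S'.sq_add, map_sq, map_sq] at h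
  exact add_left_cancel h

variable [CharP K 2]

theorem br0_shift_add_twist (D : g0 →ₗ[K] g0) (lam k k' : K) (t u u' : g0) :
    S.br0 (u + k • t) (u' + k' • t) + k • (lam • D (u' + k' • t) + S.br0 t (u' + k' • t))
        + k' • (lam • D (u + k • t) + S.br0 t (u + k • t))
      = S.br0 u u' + (lam * k) • D u' + (lam * k') • D u := by
  have two : (2 : K) = 0 := CharTwo.two_eq_zero
  simp only [map_add, map_smul, LinearMap.add_apply, LinearMap.smul_apply, S.br0_self,
    ← S.isAlt_br0.neg t u]
  linear_combination (norm := module) two • (k • S.br0 t u' + (lam * k * k') • D t)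

theorem br1_shift_add_twist (D : g1 →ₗ[K] g1) (lam k : K) (t u : g0) (f : g1) :
    S.br1 (u + k • t) f + k • (lam • D f + S.br1 t f) = S.br1 u f + (lam * k) • D f := by
  have two : (2 : K) = 0 := CharTwo.two_eq_zero
  simp only [map_add, map_smul, LinearMap.add_apply, LinearMap.smul_apply]
  linear_combination (norm := module) two • k • S.br1 t f

end SuperAlg

namespace EvenNIS

variable {S : SuperAlg K g0 g1} (N : EvenNIS K g0 g1 S)

theorem B0_br0_self (t u : g0) : N.B0 (S.br0 t u) t = 0 := by
  rw [N.symm0, ← N.inv0, S.br0_self, map_zero, LinearMap.zero_apply]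

theorem B1_br1 (t : g0) (f g : g1) : N.B1 f (S.br1 t g) = N.B0 t (S.br11 f g) := by
  rw [← N.inv2, N.symm0]

theorem B0_twist_shift [CharP K 2] {D : g0 →ₗ[K] g0} (hD : (N.B0 ∘ₗ D).IsAlt) (lam k k' : K)
    (t u u' : g0) :
    N.B0 (lam • D (u + k • t) + S.br0 t (u + k • t)) (u' + k' • t)
      = lam * N.B0 (D u) u' + N.B0 t (S.br0 u u' + (lam * k) • D u' + (lam * k') • D u) := by
  have two : (2 : K) = 0 := CharTwo.two_eq_zero
  have D_self : N.B0 (D t) t = 0 := hD t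
  have D_neg : -N.B0 (D t) u' = N.B0 (D u') t := hD.neg t u'
  simp only [map_add, map_smul, LinearMap.add_apply, LinearMap.smul_apply, smul_eq_mul,
    S.br0_self, N.inv0 t u u', N.B0_br0_self, N.symm0 t (D _), map_zero, LinearMap.zero_apply,
    D_self]
  linear_combination (-(lam * k)) * D_neg - lam * k * N.B0 (D u') t * two

end EvenNIS

namespace DevDataEven

variable {S : SuperAlg K g0 g1} {N : EvenNIS K g0 g1 S} {D : EvenDer K g0 g1 S} {al : g1 → K}
variable {S' : SuperAlg K h0 h1} {N' : EvenNIS K h0 h1 S'} {D' : EvenDer K h0 h1 S'} {al' : h1 → K}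

theorem isAlt (hdata : DevDataEven K g0 g1 S N D al) : (N.B0 ∘ₗ D.D0).IsAlt := hdata.2.2.1

theorem B1_D1 (hdata : DevDataEven K g0 g1 S N D al) (f g : g1) :
    N.B1 f (D.D1 g) = al (f + g) - al f - al g := hdata.2.2.2.2 f g

theorem D1_map (hdata : DevDataEven K g0 g1 S N D al) (hdata' : DevDataEven K h0 h1 S' N' D' al')
    (p : EvenIsometry K g0 g1 h0 h1 S N S' N') {lam : K} {t : g0}
    (hal : ∀ f, al' (p.e1 f) = lam * al f + N.B0 t (S.sq f)) (f : g1) :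
    D'.D1 (p.e1 f) = p.e1 (lam • D.D1 f + S.br1 t f) := by
  rw [← sub_eq_zero]
  refine N'.nondeg1 _ fun g' => ?_
  obtain ⟨g, rfl⟩ := p.e1.surjective g'
  rw [N'.symm1, map_sub, sub_eq_zero, p.map_B1]
  calc N'.B1 (p.e1 g) (D'.D1 (p.e1 f))
    _ = al' (p.e1 (g + f)) - al' (p.e1 g) - al' (p.e1 f) := by rw [hdata'.B1_D1, map_add]
    _ = lam * (al (g + f) - al g - al f) + N.B0 t (S.br11 g f) := by
      simp only [hal, S.sq_add, map_add (N.B0 t)]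
      ring
    _ = N.B1 g (lam • D.D1 f + S.br1 t f) := by
      rw [map_add, map_smul, smul_eq_mul, hdata.B1_D1, N.B1_br1]

end DevDataEven

end

section

variable {K V W : Type*} [Field K] [AddCommGroup V] [Module K V] [AddCommGroup W] [Module K W]

/-- The linear bijection `π : Kx ⊕ V ⊕ Kx* → Kx̃ ⊕ W ⊕ Kx̃*` given by `π(x) = λ x̃`, `π(u) = p(u) +
φ(u) x̃` and `π(x*) = λ⁻¹ (x̃* + p(t)) + ν x̃`; in the adapted isometry of `D_ev`-extensions, `φ =
B(t, ·)`. It is assembled from two triangular maps; `skewProd` adds a function of the left component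
to the right one, hence the swaps. -/
def devExtEquiv (p : V ≃ₗ[K] W) (φ : V →ₗ[K] K) {lam : K} (hlam : lam ≠ 0) (t : V) (ν : K) :
    (K × V × K) ≃ₗ[K] K × W × K :=
  let quotientEquiv : (V × K) ≃ₗ[K] W × K :=
    LinearEquiv.prodComm K V K ≪≫ₗ
      (LinearEquiv.smulOfNeZero K K lam⁻¹ (inv_ne_zero hlam)).skewProd p
        (LinearMap.toSpanSingleton K W (lam⁻¹ • p t)) ≪≫ₗ
      LinearEquiv.prodComm K K W
  LinearEquiv.prodComm K K (V × K) ≪≫ₗ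
    quotientEquiv.skewProd (LinearEquiv.smulOfNeZero K K lam hlam)
      (φ.coprod (LinearMap.toSpanSingleton K K ν)) ≪≫ₗ
    LinearEquiv.prodComm K (W × K) K

variable (p : V ≃ₗ[K] W) (φ : V →ₗ[K] K) {lam : K} (hlam : lam ≠ 0) (t : V) (ν : K)

theorem devExtEquiv_apply (r s : K) (u : V) :
    devExtEquiv p φ hlam t ν (r, u, s)
      = (lam * r + φ u + s * ν, p u + (lam⁻¹ * s) • p t, lam⁻¹ * s) := by
  simp [devExtEquiv, smul_smul, add_assoc, mul_comm s lam⁻¹]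

theorem devExtEquiv_apply_mul (r k : K) (u : V) :
    devExtEquiv p φ hlam t ν (r, u, lam * k)
      = (lam * r + φ u + lam * k * ν, p (u + k • t), k) := by
  rw [devExtEquiv_apply, inv_mul_cancel_left₀ hlam, map_add, map_smul]

end

namespace DevExtEvenFormulas

variable {K a0 a1 b0 b1 : Type} [Field K]
variable [AddCommGroup a0] [Module K a0] [AddCommGroup a1] [Module K a1]
variable [AddCommGroup b0] [Module K b0] [AddCommGroup b1] [Module K b1]
variable {S : SuperAlg K a0 a1} {N : EvenNIS K a0 a1 S} {D : EvenDer K a0 a1 S} {al : a1 → K}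
variable {S' : SuperAlg K b0 b1} {N' : EvenNIS K b0 b1 S'} {D' : EvenDer K b0 b1 S'} {al' : b1 → K}
variable {c c' : K}
variable {T : SuperAlg K (K × a0 × K) a1} {M : EvenNIS K (K × a0 × K) a1 T}
variable {T' : SuperAlg K (K × b0 × K) b1} {M' : EvenNIS K (K × b0 × K) b1 T'}

theorem map_sq (hT : DevExtEvenFormulas K a0 a1 S N D al c T M)
    (hT' : DevExtEvenFormulas K b0 b1 S' N' D' al' c' T' M')
    (p : EvenIsometry K a0 a1 b0 b1 S N S' N') {lam : K} (hlam : lam ≠ 0)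
    {t : a0} (ν : K)
    (hal : ∀ f, al' (p.e1 f) = lam * al f + N.B0 t (S.sq f)) (f : a1) :
    devExtEquiv p.e0 (N.B0 t) hlam t ν (T.sq f) = T'.sq (p.e1 f) := by
  obtain ⟨-, -, sq_eq, -, -⟩ := hT
  obtain ⟨-, -, sq_eq', -, -⟩ := hT'
  simp only [sq_eq, sq_eq', devExtEquiv_apply, hal, p.map_sq, mul_zero, zero_mul, zero_smul,
    add_zero]

theorem map_B1 (hT : DevExtEvenFormulas K a0 a1 S N D al c T M)
    (hT' : DevExtEvenFormulas K b0 b1 S' N' D' al' c' T' M')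
    (p : EvenIsometry K a0 a1 b0 b1 S N S' N') (f g : a1) :
    M'.B1 (p.e1 f) (p.e1 g) = M.B1 f g := by
  obtain ⟨-, -, -, -, B1_eq⟩ := hT
  obtain ⟨-, -, -, -, B1_eq'⟩ := hT'
  rw [B1_eq', p.map_B1, B1_eq]

variable [CharP K 2]

theorem map_br0 (hT : DevExtEvenFormulas K a0 a1 S N D al c T M)
    (hT' : DevExtEvenFormulas K b0 b1 S' N' D' al' c' T' M')
    (p : EvenIsometry K a0 a1 b0 b1 S N S' N') {lam : K} (hlam : lam ≠ 0)
    {t : a0} (ν : K) (hD : (N.B0 ∘ₗ D.D0).IsAlt)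
    (hD0 : ∀ u, D'.D0 (p.e0 u) = p.e0 (lam • D.D0 u + S.br0 t u)) (v w : K × a0 × K) :
    devExtEquiv p.e0 (N.B0 t) hlam t ν (T.br0 v w)
      = T'.br0 (devExtEquiv p.e0 (N.B0 t) hlam t ν v) (devExtEquiv p.e0 (N.B0 t) hlam t ν w) := by
  obtain ⟨br0_eq, -, -, -, -⟩ := hT
  obtain ⟨br0_eq', -, -, -, -⟩ := hT'
  obtain ⟨r, u, s⟩ := v
  obtain ⟨r', u', s'⟩ := w
  obtain ⟨k, rfl⟩ := mul_left_surjective₀ hlam s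
  obtain ⟨k', rfl⟩ := mul_left_surjective₀ hlam s'
  simp only [br0_eq, devExtEquiv_apply_mul, br0_eq', hD0, p.map_B0, ← p.map_br0, ← map_smul p.e0,
    ← map_add p.e0, N.B0_twist_shift hD, S.br0_shift_add_twist]
  simp only [devExtEquiv_apply, mul_zero, zero_mul, zero_smul, add_zero]

theorem map_br1 (hT : DevExtEvenFormulas K a0 a1 S N D al c T M)
    (hT' : DevExtEvenFormulas K b0 b1 S' N' D' al' c' T' M')
    (p : EvenIsometry K a0 a1 b0 b1 S N S' N') {lam : K} (hlam : lam ≠ 0)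
    {t : a0} (ν : K)
    (hD1 : ∀ f, D'.D1 (p.e1 f) = p.e1 (lam • D.D1 f + S.br1 t f))
    (v : K × a0 × K) (f : a1) :
    p.e1 (T.br1 v f) = T'.br1 (devExtEquiv p.e0 (N.B0 t) hlam t ν v) (p.e1 f) := by
  obtain ⟨-, br1_eq, -, -, -⟩ := hT
  obtain ⟨-, br1_eq', -, -, -⟩ := hT'
  obtain ⟨r, u, s⟩ := v
  obtain ⟨k, rfl⟩ := mul_left_surjective₀ hlam s
  simp only [br1_eq, devExtEquiv_apply_mul, br1_eq', hD1, ← p.map_br1, ← map_smul p.e1,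
    ← map_add p.e1, S.br1_shift_add_twist]

theorem map_B0 (hT : DevExtEvenFormulas K a0 a1 S N D al c T M)
    (hT' : DevExtEvenFormulas K b0 b1 S' N' D' al' c' T' M')
    (p : EvenIsometry K a0 a1 b0 b1 S N S' N') {lam : K} (hlam : lam ≠ 0)
    {t : a0} (ν : K)
    (hc : c = lam⁻¹ * lam⁻¹ * (N.B0 t t + c')) (v w : K × a0 × K) :
    M'.B0 (devExtEquiv p.e0 (N.B0 t) hlam t ν v) (devExtEquiv p.e0 (N.B0 t) hlam t ν w)
      = M.B0 v w := by
  obtain ⟨-, -, -, B0_eq, -⟩ := hT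
  obtain ⟨-, -, -, B0_eq', -⟩ := hT'
  obtain ⟨r, u, s⟩ := v
  obtain ⟨r', u', s'⟩ := w
  obtain ⟨k, rfl⟩ := mul_left_surjective₀ hlam s
  obtain ⟨k', rfl⟩ := mul_left_surjective₀ hlam s'
  have two : (2 : K) = 0 := CharTwo.two_eq_zero
  have hc' : lam * lam * c = N.B0 t t + c' := by
    rw [hc]
    field_simp
  simp only [devExtEquiv_apply_mul, B0_eq', B0_eq, p.map_B0, map_add, map_smul,
    LinearMap.add_apply, LinearMap.smul_apply, smul_eq_mul, N.symm0 u t]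
  linear_combination (k' * N.B0 t u + k * N.B0 t u' + lam * k * k' * ν) * two - k * k' * hc'

end DevExtEvenFormulas

theorem stmt6_general {K a0 a1 b0 b1 : Type} [Field K] [CharP K 2]
    [AddCommGroup a0] [Module K a0] [AddCommGroup a1] [Module K a1]
    [AddCommGroup b0] [Module K b0] [AddCommGroup b1] [Module K b1]
    {S : SuperAlg K a0 a1} {N : EvenNIS K a0 a1 S} {D : EvenDer K a0 a1 S} {al : a1 → K}
    {S' : SuperAlg K b0 b1} {N' : EvenNIS K b0 b1 S'} {D' : EvenDer K b0 b1 S'} {al' : b1 → K}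
    {c c' : K}
    (hdata : DevDataEven K a0 a1 S N D al) (hdata' : DevDataEven K b0 b1 S' N' D' al')
    {T : SuperAlg K (K × a0 × K) a1} {M : EvenNIS K (K × a0 × K) a1 T}
    (hT : DevExtEvenFormulas K a0 a1 S N D al c T M)
    {T' : SuperAlg K (K × b0 × K) b1} {M' : EvenNIS K (K × b0 × K) b1 T'}
    (hT' : DevExtEvenFormulas K b0 b1 S' N' D' al' c' T' M')
    (p : EvenIsometry K a0 a1 b0 b1 S N S' N') {lam : K} (hlam : lam ≠ 0) {t : a0}
    (hal : ∀ f : b1, al' f = lam * al (p.e1.symm f) + N.B0 t (S.sq (p.e1.symm f)))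
    (hD : ∀ u : a0, p.e0.symm (D'.D0 (p.e0 u)) = lam • D.D0 u + S.br0 t u)
    (hc : c = lam⁻¹ * lam⁻¹ * (N.B0 t t + c')) (ν : K) :
    ∃ π : EvenIsometry K (K × a0 × K) a1 (K × b0 × K) b1 T M T' M',
      (∀ (r s : K) (u : a0),
        π.e0 (r, u, s)
          = (lam * r + N.B0 t u + s * ν, p.e0 u + (lam⁻¹ * s) • p.e0 t, lam⁻¹ * s)) ∧
      (∀ f : a1, π.e1 f = p.e1 f) ∧
      (∀ (r : K) (u : a0), ∃ (r' : K) (u' : b0), π.e0 (r, u, 0) = (r', u', 0)) := by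
  have hal_map (f : a1) : al' (p.e1 f) = lam * al f + N.B0 t (S.sq f) := by
    rw [hal, LinearEquiv.symm_apply_apply]
  have hD0_map (u : a0) : D'.D0 (p.e0 u) = p.e0 (lam • D.D0 u + S.br0 t u) :=
    (LinearEquiv.symm_apply_eq _).mp (hD u)
  have map_sq := hT.map_sq hT' p hlam ν hal_map
  let π : EvenIsometry K (K × a0 × K) a1 (K × b0 × K) b1 T M T' M' :=
    { e0 := devExtEquiv p.e0 (N.B0 t) hlam t ν
      e1 := p.e1
      map_br0 := hT.map_br0 hT' p hlam ν hdata.isAlt hD0_map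
      map_br1 := hT.map_br1 hT' p hlam ν (hdata.D1_map hdata' p hal_map)
      map_br11 := T.map_br11_of_map_sq T' (e0 := (devExtEquiv p.e0 (N.B0 t) hlam t ν).toLinearMap)
        (e1 := p.e1.toLinearMap) map_sq
      map_sq := map_sq
      map_B0 := hT.map_B0 hT' p hlam ν hc
      map_B1 := hT.map_B1 hT' p }
  have π_apply := devExtEquiv_apply p.e0 (N.B0 t) hlam t ν
  exact ⟨π, π_apply, fun _ => rfl, fun r u => ⟨_, _, (π_apply r 0 u).trans (by rw [mul_zero])⟩⟩

/-- Theorem 3.12 of the paper: let `(g, B_g)` and `(g̃, B_g̃)`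
be `D_ev`-extensions (even form) of the same NIS-Lie superalgebra `(a, B_a)` by
the data `(D, α, c)` and `(D̃, α̃, c̃)` (where `c = B_g(x*,x*)`,
`c̃ = B_g̃(x̃*,x̃*)`). Given an isometry `π₀` of `(a, B_a)`, a nonzero `λ ∈ K`
and `t ∈ a_0` satisfying the stated compatibilities, the prescribed map `π` is
an adapted isometry `g → g̃`, for any `ν ∈ K`. -/
theorem stmt6 (K : Type) [Field K] [CharP K 2] (a0 a1 : Type)
    [AddCommGroup a0] [Module K a0] [AddCommGroup a1] [Module K a1]
    [FiniteDimensional K a0] [FiniteDimensional K a1]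
    (S : SuperAlg K a0 a1) (N : EvenNIS K a0 a1 S)
    (D Dt : EvenDer K a0 a1 S) (al alt : a1 → K) (c ct : K)
    (hdata : DevDataEven K a0 a1 S N D al)
    (hdatat : DevDataEven K a0 a1 S N Dt alt)
    (T : SuperAlg K (K × a0 × K) a1) (M : EvenNIS K (K × a0 × K) a1 T)
    (hT : DevExtEvenFormulas K a0 a1 S N D al c T M)
    (Tt : SuperAlg K (K × a0 × K) a1) (Mt : EvenNIS K (K × a0 × K) a1 Tt)
    (hTt : DevExtEvenFormulas K a0 a1 S N Dt alt ct Tt Mt)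
    (p0 : EvenIsometry K a0 a1 a0 a1 S N S N)
    (lam : K) (hlam : lam ≠ 0) (t : a0)
    (hal : ∀ f : a1, alt f = lam * al (p0.e1.symm f) + N.B0 t (S.sq (p0.e1.symm f)))
    (hDrel : ∀ u : a0, p0.e0.symm (Dt.D0 (p0.e0 u)) = lam • D.D0 u + S.br0 t u)
    (hc : c = lam⁻¹ * lam⁻¹ * (N.B0 t t + ct))
    (ν : K) :
    ∃ π : EvenIsometry K (K × a0 × K) a1 (K × a0 × K) a1 T M Tt Mt,
      (∀ (r s : K) (u : a0),
        π.e0 (r, u, s)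
          = (lam * r + N.B0 t u + s * ν,
             p0.e0 u + (lam⁻¹ * s) • p0.e0 t, lam⁻¹ * s)) ∧
      (∀ f : a1, π.e1 f = p0.e1 f) ∧
      -- adaptedness: `π(Kx ⊕ a) = Kx̃ ⊕ a`
      (∀ (r : K) (u : a0), ∃ (r' : K) (u' : a0), π.e0 (r, u, 0) = (r', u', 0)) := by
  exact stmt6_general hdata hdatat hT hTt p0 hlam hal hDrel hc ν

end Char2DoubleExt
end
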